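/- Simson–Wallace line theorem: if S is a point on the circumcircle of triangle V₁V₂V₄, then the feet of the perpendiculars from S to the three edge-lines V₂V₄, V₄V₁, V₁V₂ are collinear. -/

import Mathlib

open RealInnerProductSpace

/-- A point collinear with two distinct points is an affine combination of them. -/
lemma param_of_collinear (A B F : EuclideanSpace ℝ (Fin 2)) (hne : A ≠ B)
    (h : Collinear ℝ ({A, B, F} : Set (EuclideanSpace ℝ (Fin 2)))) :
    ∃ t : ℝ, F 0 = A 0 + t * (B 0 - A 0) ∧ F 1 = A 1 + t * (B 1 - A 1) := by
  rw [collinear_iff_of_mem (p₀ := A) (by simp)] at h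
  obtain ⟨v, hv⟩ := h
  obtain ⟨r, hr⟩ := hv B (by simp)
  obtain ⟨q, hq⟩ := hv F (by simp)
  have hr0 : r ≠ 0 := by
    rintro rfl
    apply hne
    simp [hr]
  refine ⟨q / r, ?_, ?_⟩ <;> rw [hr, hq] <;> simp <;> field_simp <;> ring

/-- Vanishing of the cross product implies collinearity. -/
lemma collinear_of_cross (A B C : EuclideanSpace ℝ (Fin 2))
    (h : (B 0 - A 0) * (C 1 - A 1) - (B 1 - A 1) * (C 0 - A 0) = 0) :
    Collinear ℝ ({A, B, C} : Set (EuclideanSpace ℝ (Fin 2))) := by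
  by_cases hAB : A = B
  · subst hAB
    simpa using collinear_pair ℝ A C
  rw [collinear_iff_of_mem (p₀ := A) (by simp)]
  refine ⟨B - A, ?_⟩
  have key : ∃ t : ℝ, C 0 = t * (B 0 - A 0) + A 0 ∧ C 1 = t * (B 1 - A 1) + A 1 := by
    by_cases h0 : B 0 - A 0 = 0
    · have h1 : B 1 - A 1 ≠ 0 := by
        intro h1
        apply hAB
        ext i
        fin_cases i <;> simp <;> linarith
      refine ⟨(C 1 - A 1) / (B 1 - A 1), ?_, ?_⟩ <;> field_simp <;>
        first | done | (ring1) | linear_combination -h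
    · refine ⟨(C 0 - A 0) / (B 0 - A 0), ?_, ?_⟩ <;> field_simp <;>
        first | done | (ring1) | linear_combination h
  obtain ⟨t, ht0, ht1⟩ := key
  intro p hp
  simp only [Set.mem_insert_iff, Set.mem_singleton_iff] at hp
  rcases hp with rfl | rfl | rfl
  · exact ⟨0, by simp⟩
  · exact ⟨1, by simp⟩
  · refine ⟨t, ?_⟩
    ext i
    fin_cases i
    · simpa using ht0
    · simpa using ht1

lemma sq_of_dist (O A B : EuclideanSpace ℝ (Fin 2)) (h : dist O A = dist O B) :
    (O 0 - A 0) ^ 2 + (O 1 - A 1) ^ 2 = (O 0 - B 0) ^ 2 + (O 1 - B 1) ^ 2 := by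
  have h2 : dist O A ^ 2 = dist O B ^ 2 := by rw [h]
  rw [EuclideanSpace.dist_sq_eq, EuclideanSpace.dist_sq_eq] at h2
  simpa [Fin.sum_univ_two, Real.dist_eq, sq_abs] using h2

lemma len_ne (A B : EuclideanSpace ℝ (Fin 2)) (h : A ≠ B) :
    (B 0 - A 0) ^ 2 + (B 1 - A 1) ^ 2 ≠ 0 := by
  intro h0
  apply h
  have e0 : B 0 - A 0 = 0 := by nlinarith [sq_nonneg (B 0 - A 0), sq_nonneg (B 1 - A 1)]
  have e1 : B 1 - A 1 = 0 := by nlinarith [sq_nonneg (B 0 - A 0), sq_nonneg (B 1 - A 1)]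
  ext i
  fin_cases i <;> simp <;> linarith

/-- Foot parameter. -/
lemma foot_eq (A B S F : EuclideanSpace ℝ (Fin 2)) (hne : A ≠ B)
    (h : Collinear ℝ ({A, B, F} : Set (EuclideanSpace ℝ (Fin 2))) ∧ ⟪S - F, B - A⟫ = 0) :
    ∃ t : ℝ, F 0 = A 0 + t * (B 0 - A 0) ∧ F 1 = A 1 + t * (B 1 - A 1) ∧
      t * ((B 0 - A 0) ^ 2 + (B 1 - A 1) ^ 2) =
        (S 0 - A 0) * (B 0 - A 0) + (S 1 - A 1) * (B 1 - A 1) := by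
  obtain ⟨t, h0, h1⟩ := param_of_collinear A B F hne h.1
  refine ⟨t, h0, h1, ?_⟩
  have h2 := h.2
  simp [PiLp.inner_apply, Fin.sum_univ_two] at h2
  rw [h0, h1] at h2
  linear_combination -h2

/-- Concyclicity in coordinates, with `S` at the origin. -/
lemma menelaus (a0 a1 b0 b1 c0 c1 o0 o1 : ℝ)
    (ha : a0 ^ 2 + a1 ^ 2 = 2 * (o0 * a0 + o1 * a1))
    (hb : b0 ^ 2 + b1 ^ 2 = 2 * (o0 * b0 + o1 * b1))
    (hc : c0 ^ 2 + c1 ^ 2 = 2 * (o0 * c0 + o1 * c1)) :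
    (b0 * (b0 - c0) + b1 * (b1 - c1)) * (c0 * (c0 - a0) + c1 * (c1 - a1)) *
        (a0 * (a0 - b0) + a1 * (a1 - b1)) +
      (c0 * (c0 - b0) + c1 * (c1 - b1)) * (a0 * (a0 - c0) + a1 * (a1 - c1)) *
        (b0 * (b0 - a0) + b1 * (b1 - a1)) = 0 := by
  have hcon : (a0 ^ 2 + a1 ^ 2) * (b0 * c1 - b1 * c0) + (b0 ^ 2 + b1 ^ 2) * (c0 * a1 - c1 * a0)
      + (c0 ^ 2 + c1 ^ 2) * (a0 * b1 - a1 * b0) = 0 := by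
    rw [ha, hb, hc]; ring
  linear_combination ((b0 - a0) * (c1 - a1) - (b1 - a1) * (c0 - a0)) * hcon

/-- Simson–Wallace line theorem: if `S` is a point on the circumcircle (centre `O`) of
triangle `V₁V₂V₄`, then the feet `F₁, F₂, F₃` of the perpendiculars from `S` to the
three edge-lines `V₂V₄`, `V₄V₁`, `V₁V₂` are collinear.  Each foot is characterized by
lying on the edge-line and by the perpendicularity of `S - foot` to the edge. -/
theorem stmt_6 (V₁ V₂ V₄ O S F₁ F₂ F₃ : EuclideanSpace ℝ (Fin 2))
    (htri : AffineIndependent ℝ ![V₁, V₂, V₄])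
    (hO1 : dist O V₁ = dist O V₂) (hO2 : dist O V₂ = dist O V₄)
    (hS : dist O S = dist O V₁)
    (hF₁ : Collinear ℝ ({V₂, V₄, F₁} : Set (EuclideanSpace ℝ (Fin 2))) ∧
      ⟪S - F₁, V₄ - V₂⟫ = 0)
    (hF₂ : Collinear ℝ ({V₄, V₁, F₂} : Set (EuclideanSpace ℝ (Fin 2))) ∧
      ⟪S - F₂, V₁ - V₄⟫ = 0)
    (hF₃ : Collinear ℝ ({V₁, V₂, F₃} : Set (EuclideanSpace ℝ (Fin 2))) ∧
      ⟪S - F₃, V₂ - V₁⟫ = 0) :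
    Collinear ℝ ({F₁, F₂, F₃} : Set (EuclideanSpace ℝ (Fin 2))) := by
  
  have h12 : V₁ ≠ V₂ := fun h => by
    have := htri.injective.ne (show (0 : Fin 3) ≠ 1 by decide)
    exact this (by simpa using h)
  have h24 : V₂ ≠ V₄ := fun h => by
    have := htri.injective.ne (show (1 : Fin 3) ≠ 2 by decide)
    exact this (by simpa using h)
  have h41 : V₄ ≠ V₁ := fun h => by
    have := htri.injective.ne (show (2 : Fin 3) ≠ 0 by decide)
    exact this (by simpa using h)
  obtain ⟨t₁, x1, y1, e1⟩ := foot_eq V₂ V₄ S F₁ h24 hF₁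
  obtain ⟨t₂, x2, y2, e2⟩ := foot_eq V₄ V₁ S F₂ h41 hF₂
  obtain ⟨t₃, x3, y3, e3⟩ := foot_eq V₁ V₂ S F₃ h12 hF₃
  have l1 := len_ne _ _ h24
  have l2 := len_ne _ _ h41
  have l3 := len_ne _ _ h12
  have d1 := sq_of_dist _ _ _ hS
  have d2 := sq_of_dist _ _ _ (hS.trans hO1)
  have d4 := sq_of_dist _ _ _ ((hS.trans hO1).trans hO2)
  have hm := menelaus (V₁ 0 - S 0) (V₁ 1 - S 1) (V₂ 0 - S 0) (V₂ 1 - S 1)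
    (V₄ 0 - S 0) (V₄ 1 - S 1) (O 0 - S 0) (O 1 - S 1)
    (by linear_combination -d1) (by linear_combination -d2) (by linear_combination -d4)
  have hM : t₁ * t₂ * t₃ + (1 - t₁) * (1 - t₂) * (1 - t₃) = 0 := by
    generalize hL1 : (V₄ 0 - V₂ 0) ^ 2 + (V₄ 1 - V₂ 1) ^ 2 = L1 at *
    generalize hL2 : (V₁ 0 - V₄ 0) ^ 2 + (V₁ 1 - V₄ 1) ^ 2 = L2 at *
    generalize hL3 : (V₂ 0 - V₁ 0) ^ 2 + (V₂ 1 - V₁ 1) ^ 2 = L3 at *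
    have f1 : (1 - t₁) * L1 =
        (S 0 - V₄ 0) * (V₂ 0 - V₄ 0) + (S 1 - V₄ 1) * (V₂ 1 - V₄ 1) := by
      linear_combination -e1 - hL1
    have f2 : (1 - t₂) * L2 =
        (S 0 - V₁ 0) * (V₄ 0 - V₁ 0) + (S 1 - V₁ 1) * (V₄ 1 - V₁ 1) := by
      linear_combination -e2 - hL2
    have f3 : (1 - t₃) * L3 =
        (S 0 - V₂ 0) * (V₁ 0 - V₂ 0) + (S 1 - V₂ 1) * (V₁ 1 - V₂ 1) := by
      linear_combination -e3 - hL3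
    have hprod : (t₁ * t₂ * t₃ + (1 - t₁) * (1 - t₂) * (1 - t₃)) * (L1 * L2 * L3) = 0 := by
      have : (t₁ * t₂ * t₃ + (1 - t₁) * (1 - t₂) * (1 - t₃)) * (L1 * L2 * L3) =
        (t₁ * L1) * (t₂ * L2) * (t₃ * L3) +
          ((1 - t₁) * L1) * ((1 - t₂) * L2) * ((1 - t₃) * L3) := by ring
      rw [this, e1, e2, e3, f1, f2, f3]
      linear_combination hm
    exact (mul_eq_zero.mp hprod).resolve_right (mul_ne_zero (mul_ne_zero l1 l2) l3)
  apply collinear_of_cross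
  rw [x1, x2, x3, y1, y2, y3]
  linear_combination ((V₂ 0 - V₁ 0) * (V₄ 1 - V₁ 1) - (V₂ 1 - V₁ 1) * (V₄ 0 - V₁ 0)) * hM
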